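/- arXiv:2509.02874 — 2 statements merged into one kernel-verified Lean document; each statement's English description precedes it below -/
import Mathlib

section
/- Let n > 4, let α be real with 0 < α < 1/2, let 1 ≤ i < j ≤ n, and set k = min(j−i, n−(j−i)). Then K_{C_n}(α)_{i,j} = (α^k·d_{n−k−1}(α) + α^{n−k}·d_{k−1}(α)) / (d_{n−1}(α) − 2α^n − 2α²·d_{n−2}(α)). -/
/-- `dpoly n α = ∑_{m=0}^{⌊n/2⌋} (-1)^m C(n-m, m) α^(2m)`. -/
noncomputable def dpoly (n : ℕ) (α : ℝ) : ℝ :=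
  ∑ m ∈ Finset.range (n / 2 + 1), (-1 : ℝ) ^ m * (Nat.choose (n - m) m : ℝ) * α ^ (2 * m)

/-- Adjacency matrix of the cycle graph on `n` vertices. -/
def cycleAdj (n : ℕ) : Matrix (Fin n) (Fin n) ℝ :=
  fun i j => if (i.val + 1) % n = j.val ∨ (j.val + 1) % n = i.val then 1 else 0

/-!
The resolvent of the adjacency matrix of `C_n` is, up to a scalar, a circulant matrix whose first
column `f` has to satisfy `f t = α (f (t - 1) + f (t + 1))` away from `0`. Since
`e_{m+2} = e_{m+1} - α² e_m` for `e_m = d_{m-1}(α)`, both `t ↦ α ^ t * e_{n-t}` and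
`t ↦ α ^ (n-t) * e_t` solve this recurrence, and their sum is invariant under `t ↦ n - t`, so that
it descends to the cycle. The defect `f 0 - 2 α f 1` of the recurrence at `0` is the denominator.
-/

section Recurrence

variable (α : ℝ)

lemma dpoly_eq_sum_range {n N : ℕ} (h : n / 2 < N) :
    dpoly n α = ∑ m ∈ Finset.range N,
      (-1 : ℝ) ^ m * (Nat.choose (n - m) m : ℝ) * α ^ (2 * m) := by
  refine Finset.sum_subset (Finset.range_mono h) fun m _ hm => ?_
  rw [Finset.mem_range, not_lt] at hm
  simp [Nat.choose_eq_zero_of_lt (show n - m < m by omega)]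

lemma dpoly_add_two (n : ℕ) : dpoly (n + 2) α = dpoly (n + 1) α - α ^ 2 * dpoly n α := by
  rw [dpoly_eq_sum_range α (show (n + 2) / 2 < n + 2 by omega),
    dpoly_eq_sum_range α (show (n + 1) / 2 < n + 2 by omega),
    dpoly_eq_sum_range α (show n / 2 < n + 1 by omega),
    Finset.sum_range_succ', Finset.sum_range_succ' _ (n + 1), Finset.mul_sum,
    add_sub_right_comm, ← Finset.sum_sub_distrib]
  congr 1
  refine Finset.sum_congr rfl fun m hm => ?_
  have pascal : (n + 2 - (m + 1)).choose (m + 1) =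
      (n - m).choose m + (n + 1 - (m + 1)).choose (m + 1) := by
    rw [Finset.mem_range] at hm
    rw [show n + 2 - (m + 1) = n - m + 1 by omega, Nat.add_sub_add_right, Nat.choose_succ_succ]
  rw [pascal]
  push_cast
  ring

/-- The sequence `d_{m-1}(α)`, extended to `m = 0` by the value `d_{-1}(α) = 0` which the
recurrence `dpoly_add_two` dictates. -/
noncomputable def dpolyPred : ℕ → ℝ
  | 0 => 0
  | m + 1 => dpoly m α

lemma dpolyPred_zero : dpolyPred α 0 = 0 := rfl

lemma dpolyPred_one : dpolyPred α 1 = 1 := by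
  simp [dpolyPred, dpoly]

lemma dpolyPred_add_two (m : ℕ) :
    dpolyPred α (m + 2) = dpolyPred α (m + 1) - α ^ 2 * dpolyPred α m := by
  cases m with
  | zero => simp [dpolyPred, dpoly]
  | succ m => exact dpoly_add_two α m

/-- The denominator of the Katz index of `C_n`; it is the determinant of `1 - α • cycleAdj n`
for `2 < n`. -/
noncomputable def katzDenom (n : ℕ) : ℝ :=
  dpoly (n - 1) α - 2 * α ^ n - 2 * α ^ 2 * dpoly (n - 2) α

lemma katzDenom_add_two (m : ℕ) :
    katzDenom α (m + 2) =
      dpolyPred α (m + 2) - 2 * α ^ (m + 2) - 2 * α ^ 2 * dpolyPred α (m + 1) :=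
  rfl

variable {α}

lemma dpolyPred_add_one_pos_and_pow_le (h0 : 0 ≤ α) (h1 : α < 1 / 2) (m : ℕ) :
    0 < dpolyPred α (m + 1) ∧ α ^ m ≤ dpolyPred α (m + 1) - α * dpolyPred α m := by
  induction m with
  | zero => simp [dpolyPred_zero, dpolyPred_one]
  | succ m ih =>
    obtain ⟨hpos, hle⟩ := ih
    have hgap : α ^ (m + 1) ≤ dpolyPred α (m + 2) - α * dpolyPred α (m + 1) :=
      calc α ^ (m + 1) = α * α ^ m := pow_succ' α m
        _ ≤ α * (dpolyPred α (m + 1) - α * dpolyPred α m) := by gcongr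
        _ ≤ (1 - 2 * α) * dpolyPred α (m + 1)
              + α * (dpolyPred α (m + 1) - α * dpolyPred α m) :=
            le_add_of_nonneg_left (mul_nonneg (by linarith) hpos.le)
        _ = dpolyPred α (m + 2) - α * dpolyPred α (m + 1) := by rw [dpolyPred_add_two]; ring
    refine ⟨?_, hgap⟩
    have hprev : α * (α * dpolyPred α m) ≤ α * dpolyPred α (m + 1) := by
      gcongr
      linarith [pow_nonneg h0 m]
    have hmul : 0 < (1 - α) * dpolyPred α (m + 1) := mul_pos (by linarith) hpos
    rw [dpolyPred_add_two]
    linarith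

lemma katzDenom_pos {n : ℕ} (hn : 2 ≤ n) (h0 : 0 ≤ α) (h1 : α < 1 / 2) :
    0 < katzDenom α n := by
  obtain ⟨m, rfl⟩ := Nat.exists_eq_add_of_le' hn
  obtain ⟨hpos, hle⟩ := dpolyPred_add_one_pos_and_pow_le h0 h1 (m + 1)
  calc 0 < (1 - 2 * α) * dpolyPred α (m + 2) := mul_pos (by linarith) hpos
    _ ≤ (1 - 2 * α) * dpolyPred α (m + 2)
          + 2 * α * (dpolyPred α (m + 2) - α * dpolyPred α (m + 1) - α ^ (m + 1)) :=
        le_add_of_nonneg_right (mul_nonneg (by linarith) (sub_nonneg.2 hle))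
    _ = katzDenom α (m + 2) := by
        rw [katzDenom_add_two]
        ring

end Recurrence

section Green

variable (α : ℝ)

/-- The Green function of `1 - α • cycleAdj (s + t)`, up to the factor `katzDenom α (s + t)`,
at two vertices which cut the cycle into arcs of lengths `s` and `t`. Taking both arc lengths as
arguments keeps truncated subtraction out of the recurrence. -/
noncomputable def cycleGreen (s t : ℕ) : ℝ :=
  α ^ s * dpolyPred α t + α ^ t * dpolyPred α s

lemma cycleGreen_comm (s t : ℕ) : cycleGreen α s t = cycleGreen α t s :=
  add_comm _ _

lemma cycleGreen_succ_succ (s t : ℕ) :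
    cycleGreen α (s + 1) (t + 1) = α * (cycleGreen α (s + 2) t + cycleGreen α s (t + 2)) := by
  simp only [cycleGreen, dpolyPred_add_two]
  ring

lemma cycleGreen_zero_sub {n : ℕ} (hn : 2 ≤ n) :
    cycleGreen α 0 n - α * (cycleGreen α 1 (n - 1) + cycleGreen α (n - 1) 1) =
      katzDenom α n := by
  obtain ⟨m, rfl⟩ := Nat.exists_eq_add_of_le' hn
  simp only [katzDenom_add_two, cycleGreen, dpolyPred_zero, dpolyPred_one, Nat.add_succ_sub_one]
  ring

lemma cycleGreen_eq_dpoly {s t : ℕ} (hs : 0 < s) (ht : 0 < t) :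
    cycleGreen α s t = α ^ s * dpoly (t - 1) α + α ^ t * dpoly (s - 1) α := by
  obtain ⟨s, rfl⟩ := Nat.exists_eq_add_one.2 hs
  obtain ⟨t, rfl⟩ := Nat.exists_eq_add_one.2 ht
  rfl

lemma cycleGreen_min {n t : ℕ} (ht : t ≤ n) :
    cycleGreen α (min t (n - t)) (n - min t (n - t)) = cycleGreen α t (n - t) := by
  rcases le_total t (n - t) with h | h
  · rw [min_eq_left h]
  · rw [min_eq_right h, Nat.sub_sub_self ht, cycleGreen_comm]

end Green

section Resolvent

open Matrix

lemma fin_val_add_one_eq_mod {n : ℕ} [NeZero n] (x : Fin n) :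
    ((x + 1 : Fin n) : ℕ) = (x + 1) % n := by
  rw [Fin.val_add, Fin.val_one', Nat.add_mod_mod]

lemma cycleAdj_apply {n : ℕ} [NeZero n] (i j : Fin n) :
    cycleAdj n i j = if j = i + 1 ∨ j = i - 1 then 1 else 0 := by
  simp only [cycleAdj, ← fin_val_add_one_eq_mod, ← Fin.ext_iff, eq_sub_iff_add_eq,
    eq_comm (a := i + 1)]

lemma cycleAdj_mul_circulant {n : ℕ} (hn : 2 < n) [NeZero n] (f : Fin n → ℝ) :
    cycleAdj n * circulant f = circulant fun x => f (x + 1) + f (x - 1) := by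
  have neighbours_ne (i : Fin n) : i + 1 ≠ i - 1 := by
    intro h
    have two_eq_zero : (1 + 1 : Fin n) = 0 := by
      rwa [eq_sub_iff_add_eq, add_assoc, add_eq_left] at h
    rw [Fin.ext_iff, fin_val_add_one_eq_mod, Fin.val_one', Nat.mod_add_mod,
      Nat.mod_eq_of_lt hn] at two_eq_zero
    exact two_ne_zero two_eq_zero
  ext i j
  have filter_adj : ({l | l = i + 1 ∨ l = i - 1} : Finset (Fin n)) = {i + 1, i - 1} := by
    ext l
    simp
  simp only [mul_apply, cycleAdj_apply, circulant_apply, ite_mul, one_mul, zero_mul]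
  rw [← Finset.sum_filter, filter_adj, Finset.sum_pair (neighbours_ne i),
    add_sub_right_comm, sub_right_comm]

lemma cycleGreen_val_add_one (α : ℝ) {n : ℕ} [NeZero n] (x : Fin n) :
    cycleGreen α (x + 1 : Fin n) (n - (x + 1 : Fin n)) =
      cycleGreen α (x + 1 : ℕ) (n - (x + 1 : ℕ)) := by
  rcases (Nat.succ_le_of_lt x.isLt).lt_or_eq with h | h
  · rw [Fin.val_add_one_of_lt' h]
  · have wrap : ((x + 1 : Fin n) : ℕ) = 0 := by
      rw [fin_val_add_one_eq_mod, ← Nat.succ_eq_add_one, h, Nat.mod_self]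
    rw [wrap, ← Nat.succ_eq_add_one, h, Nat.sub_self, Nat.sub_zero, cycleGreen_comm]

lemma cycleGreen_val_sub_neighbours (α : ℝ) {n : ℕ} (hn : 2 ≤ n) [NeZero n] (x : Fin n) :
    cycleGreen α x (n - x) - α * (cycleGreen α (x + 1 : Fin n) (n - (x + 1 : Fin n))
      + cycleGreen α (x - 1 : Fin n) (n - (x - 1 : Fin n))) =
      if x = 0 then katzDenom α n else 0 := by
  rw [cycleGreen_val_add_one]
  split_ifs with hx
  · have val_pred : ((x - 1 : Fin n) : ℕ) = n - 1 := by
      rw [hx, Fin.val_sub, Fin.val_one', Nat.mod_eq_of_lt hn, Fin.val_zero, add_zero,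
        Nat.mod_eq_of_lt (by omega)]
    rw [val_pred, hx, Fin.val_zero, Nat.sub_sub_self (by omega)]
    exact cycleGreen_zero_sub α hn
  · have val_pred : ((x - 1 : Fin n) : ℕ) = x - 1 := Fin.val_sub_one_of_ne_zero hx
    obtain ⟨s, hs⟩ := Nat.exists_eq_succ_of_ne_zero (Fin.val_ne_zero_iff.2 hx)
    obtain ⟨t, ht⟩ := Nat.exists_eq_add_of_lt x.isLt
    rw [hs] at ht
    rw [val_pred, hs, show n - s.succ = t + 1 by omega, show n - (s.succ + 1) = t by omega,
      show n - (s.succ - 1) = t + 2 by omega]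
    exact sub_eq_zero.2 (cycleGreen_succ_succ α s t)

lemma one_sub_smul_cycleAdj_mul_circulant (α : ℝ) {n : ℕ} (hn : 2 < n) :
    (1 - α • cycleAdj n) * circulant (fun x : Fin n => cycleGreen α x (n - x)) =
      katzDenom α n • 1 := by
  have : NeZero n := ⟨by omega⟩
  rw [Matrix.sub_mul, Matrix.one_mul, Matrix.smul_mul, cycleAdj_mul_circulant hn]
  ext i j
  simp only [Matrix.sub_apply, Matrix.smul_apply, circulant_apply, smul_eq_mul, one_apply,
    mul_ite, mul_one, mul_zero]
  rw [cycleGreen_val_sub_neighbours α hn.le]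
  simp only [sub_eq_zero]

lemma inv_one_sub_smul_cycleAdj {α : ℝ} {n : ℕ} (hn : 2 < n) (hα : katzDenom α n ≠ 0) :
    (1 - α • cycleAdj n)⁻¹ =
      circulant fun x : Fin n => cycleGreen α x (n - x) / katzDenom α n := by
  refine inv_eq_right_inv ?_
  have circulant_div : (circulant fun x : Fin n => cycleGreen α x (n - x) / katzDenom α n) =
      (katzDenom α n)⁻¹ • circulant fun x : Fin n => cycleGreen α x (n - x) := by
    ext i j
    exact div_eq_inv_mul _ _
  rw [circulant_div, Matrix.mul_smul, one_sub_smul_cycleAdj_mul_circulant α hn,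
    inv_smul_smul₀ hα]

end Resolvent

theorem stmt3_general (n : ℕ) (hn : 2 < n) (α : ℝ)
    (hα : dpoly (n - 1) α - 2 * α ^ n - 2 * α ^ 2 * dpoly (n - 2) α ≠ 0)
    (i j : Fin n) (hij : i < j)
    (k : ℕ) (hk : k = min (j.val - i.val) (n - (j.val - i.val))) :
    (((1 : Matrix (Fin n) (Fin n) ℝ) - α • cycleAdj n)⁻¹ - 1) i j
      = (α ^ k * dpoly (n - k - 1) α + α ^ (n - k) * dpoly (k - 1) α)
          / (dpoly (n - 1) α - 2 * α ^ n - 2 * α ^ 2 * dpoly (n - 2) α) := by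
  have val_sub : ((i - j : Fin n) : ℕ) = n - (j - i) := by
    rw [Fin.coe_sub_iff_lt.2 hij]
    omega
  rw [Matrix.sub_apply, Matrix.one_apply_ne hij.ne, sub_zero, inv_one_sub_smul_cycleAdj hn hα,
    Matrix.circulant_apply, val_sub, Nat.sub_sub_self (by omega), cycleGreen_comm,
    ← cycleGreen_min α (show j - i ≤ n by omega), ← hk,
    cycleGreen_eq_dpoly α (show 0 < k by omega) (show 0 < n - k by omega), katzDenom]

theorem stmt3 (n : ℕ) (hn : 4 < n) (α : ℝ) (hα0 : 0 < α) (hα1 : α < 1 / 2)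
    (i j : ℕ) (hi : 1 ≤ i) (hij : i < j) (hj : j ≤ n)
    (k : ℕ) (hk : k = min (j - i) (n - (j - i))) :
    (((1 : Matrix (Fin n) (Fin n) ℝ) - α • cycleAdj n)⁻¹ - 1)
        ⟨i - 1, by omega⟩ ⟨j - 1, by omega⟩
      = (α ^ k * dpoly (n - k - 1) α + α ^ (n - k) * dpoly (k - 1) α)
          / (dpoly (n - 1) α - 2 * α ^ n - 2 * α ^ 2 * dpoly (n - 2) α) :=
  stmt3_general n (by omega) α (katzDenom_pos (by omega) hα0.le hα1).ne'
    _ _ (Fin.mk_lt_mk.2 (by omega)) k (by dsimp only; omega)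
end

section
/- Let α be real with 0 < α < 1/2, and let i, k, n be integers with i ≥ 1, k ≥ 1, and n − k − 2i − 1 ≥ 0. Then K_{P_n}(α)_{i,i+k} ≤ K_{P_n}(α)_{i+1,i+k+1}. -/
/-- Adjacency matrix of the path graph on `n` vertices. -/
def pathAdj (n : ℕ) : Matrix (Fin n) (Fin n) ℝ :=
  fun i j => if i.val + 1 = j.val ∨ j.val + 1 = i.val then 1 else 0

/-!
Number the vertices from `0` and let `S` be the rescaled Chebyshev polynomials of the second kind:
`S (-1) = 0`, `S 0 = 1`, `S (m + 1) = X * S m - S (m - 1)`. Each column of the inverse of `x - A`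
satisfies this recurrence on both sides of the diagonal, with zero boundary values at `-1` and `n`;
hence its `(a, b)` entry is `S (min a b) * S (n - 1 - max a b) / S n` evaluated at `x`. Shifting
both indices by one increases the numerator by exactly `S (n - 3 - a - b)`, which is nonnegative for
`x ≥ 2`. The Katz index is the case `x = α⁻¹`, since `1 - α A = α (α⁻¹ - A)`.
-/

section Chebyshev

open Polynomial Polynomial.Chebyshev

variable (R : Type*) [CommRing R]

lemma S_mul_S_sub (m l : ℤ) : S R m * S R l - S R (m - 1) * S R (l - 1) = S R (m + l) := by
  induction m using Polynomial.Chebyshev.induct with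
  | zero => simp
  | one => linear_combination (norm := (simp; ring_nf)) -S_add_one R l
  | add_two m ih₁ ih₀ =>
    linear_combination (norm := ring_nf) X * ih₁ - ih₀ - S_add_two R (m + l) +
      S R l * S_add_two R m - S R (l - 1) * S_add_one R m
  | neg_add_one m ih₀ ih₁ =>
    linear_combination (norm := ring_nf) X * ih₀ - ih₁ - S_sub_one R (-m + l) +
      S R l * S_sub_one R (-m) - S R (l - 1) * S_sub_two R (-m)

lemma S_add_one_mul_S_sub (m l : ℤ) :
    S R (m + 1) * S R l - S R m * S R (l + 1) = S R (l - m - 1) := by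
  have h := S_mul_S_sub R (-m - 2) (l + 1)
  rw [S_neg_sub_two, show -m - 2 - 1 = -(m + 1) - 2 by ring, S_neg_sub_two,
    add_sub_cancel_right, show -m - 2 + (l + 1) = l - m - 1 by ring] at h
  linear_combination h

variable {R}

lemma eval_S_add_one (x : R) (m : ℤ) :
    (S R (m + 1)).eval x = x * (S R m).eval x - (S R (m - 1)).eval x := by
  rw [S_add_one, eval_sub, eval_mul, eval_X]

lemma eval_S_nonneg_and_lt_add_one [LinearOrder R] [IsStrictOrderedRing R] {x : R} (hx : 2 ≤ x)
    {m : ℤ} (hm : -1 ≤ m) :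
    0 ≤ (S R m).eval x ∧ (S R m).eval x < (S R (m + 1)).eval x := by
  induction m, hm using Int.leInduction with
  | base => simp
  | succ m _ ih =>
    obtain ⟨h_nonneg, h_lt⟩ := ih
    have h_pos : 0 < (S R (m + 1)).eval x := h_nonneg.trans_lt h_lt
    refine ⟨h_pos.le, ?_⟩
    rw [eval_S_add_one x (m + 1), add_sub_cancel_right]
    nlinarith

lemma eval_S_pos [LinearOrder R] [IsStrictOrderedRing R] {x : R} (hx : 2 ≤ x)
    {m : ℤ} (hm : 0 ≤ m) : 0 < (S R m).eval x := by
  obtain ⟨h_nonneg, h_lt⟩ := eval_S_nonneg_and_lt_add_one hx (m := m - 1) (by omega)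
  rw [sub_add_cancel] at h_lt
  exact h_nonneg.trans_lt h_lt

/-- The unnormalised Green kernel of `x - A`, where `A` is the adjacency matrix of the path on
`0, …, n - 1`: for `0 ≤ a, b < n` these are the entries of the adjugate of `x - A`. The indices are
integers so as to include the boundary points `-1` and `n`, where the kernel vanishes. -/
noncomputable def pathGreen (x : R) (n a b : ℤ) : R :=
  (S R (min a b)).eval x * (S R (n - 1 - max a b)).eval x

lemma pathGreen_neg_one_left (x : R) (n : ℤ) {b : ℤ} (hb : -1 ≤ b) :
    pathGreen x n (-1) b = 0 := by
  simp [pathGreen, hb]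

lemma pathGreen_self_left (x : R) {n b : ℤ} (hb : b ≤ n) : pathGreen x n n b = 0 := by
  simp [pathGreen, hb]

lemma pathGreen_recurrence (x : R) (n a b : ℤ) :
    x * pathGreen x n a b - (pathGreen x n (a - 1) b + pathGreen x n (a + 1) b) =
      if a = b then (S R n).eval x else 0 := by
  unfold pathGreen
  rcases lt_trichotomy a b with hab | rfl | hba
  · rw [if_neg hab.ne, min_eq_left hab.le, max_eq_right hab.le, min_eq_left (by omega),
      max_eq_right (by omega), min_eq_left (by omega), max_eq_right (by omega), eval_S_add_one]
    ring
  · have h := congrArg (eval x) (S_mul_S_sub R (a + 1) (n - 1 - a))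
    rw [show a + 1 + (n - 1 - a) = n by ring, show n - 1 - a - 1 = n - 1 - (a + 1) by ring,
      add_sub_cancel_right, eval_sub, eval_mul, eval_mul, eval_S_add_one] at h
    rw [if_pos rfl, min_self, max_self, min_eq_left (by omega), max_eq_right (by omega),
      min_eq_right (by omega), max_eq_left (by omega), ← h]
    ring
  · have h := eval_S_add_one x (n - 1 - a)
    rw [show n - 1 - a + 1 = n - 1 - (a - 1) by ring,
      show n - 1 - a - 1 = n - 1 - (a + 1) by ring] at h
    rw [if_neg hba.ne', min_eq_right hba.le, max_eq_left hba.le, min_eq_right (by omega),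
      max_eq_left (by omega), min_eq_right (by omega), max_eq_left (by omega), h]
    ring

lemma pathGreen_add_one_add_one_sub (x : R) (n a b : ℤ) :
    pathGreen x n (a + 1) (b + 1) - pathGreen x n a b = (S R (n - 3 - a - b)).eval x := by
  have h := congrArg (eval x) (S_add_one_mul_S_sub R (min a b) (n - 1 - (max a b + 1)))
  rw [show n - 1 - (max a b + 1) - min a b - 1 = n - 3 - a - b by grind,
    show n - 1 - (max a b + 1) + 1 = n - 1 - max a b by ring, eval_sub, eval_mul, eval_mul] at h
  rw [pathGreen, pathGreen, min_add_add_right, max_add_add_right, h]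

end Chebyshev

section PathResolvent

open Polynomial Polynomial.Chebyshev
open scoped Matrix

lemma pathAdj_mulVec_apply {n : ℕ} {f : ℤ → ℝ} (h_left : f (-1) = 0) (h_right : f n = 0)
    (a : Fin n) : (pathAdj n *ᵥ fun c => f c) a = f (a - 1) + f (a + 1) := by
  have h_entry (c : Fin n) : pathAdj n a c * f c =
      (if a.val = c.val + 1 then f c else 0) + (if a.val + 1 = c.val then f c else 0) := by
    unfold pathAdj
    grind
  have h_pred : (∑ c ∈ Finset.range n, if a.val = c + 1 then f c else 0) = f (a - 1) := by
    obtain ⟨_ | c, ha⟩ := a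
    · simp [h_left]
    · simp only [add_left_inj, Finset.sum_ite_eq]
      grind
  have h_succ : (∑ c ∈ Finset.range n, if a.val + 1 = c then f c else 0) = f (a + 1) := by
    rw [Finset.sum_ite_eq]
    grind
  rw [Matrix.mulVec, dotProduct, Finset.sum_congr rfl fun c _ => h_entry c, Finset.sum_add_distrib,
    Fin.sum_univ_eq_sum_range fun c => if a.val = c + 1 then f c else 0,
    Fin.sum_univ_eq_sum_range fun c => if a.val + 1 = c then f c else 0, h_pred, h_succ]

lemma sub_pathAdj_mul_pathGreen (x : ℝ) (n : ℕ) :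
    (x • (1 : Matrix (Fin n) (Fin n) ℝ) - pathAdj n) *
        Matrix.of (fun a b : Fin n => pathGreen x n a b) = (S ℝ n).eval x • 1 := by
  ext a b
  have h_sum : (pathAdj n * Matrix.of fun a b : Fin n => pathGreen x n a b) a b =
      pathGreen x n (a - 1) b + pathGreen x n (a + 1) b :=
    pathAdj_mulVec_apply (f := fun c => pathGreen x n c b)
      (pathGreen_neg_one_left x n (by omega)) (pathGreen_self_left x (by omega)) a
  rw [sub_mul, Matrix.smul_mul, one_mul, Matrix.sub_apply, h_sum, Matrix.smul_apply,
    Matrix.of_apply, smul_eq_mul, pathGreen_recurrence, Matrix.smul_apply, Matrix.one_apply]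
  simp [Fin.ext_iff]

lemma inv_one_sub_smul_pathAdj_apply {α : ℝ} {n : ℕ} (hα : α ≠ 0)
    (hS : (S ℝ n).eval α⁻¹ ≠ 0) (a b : Fin n) :
    ((1 : Matrix (Fin n) (Fin n) ℝ) - α • pathAdj n)⁻¹ a b =
      pathGreen α⁻¹ n a b / (α * (S ℝ n).eval α⁻¹) := by
  have h_factor : (1 : Matrix (Fin n) (Fin n) ℝ) - α • pathAdj n =
      α • (α⁻¹ • (1 : Matrix (Fin n) (Fin n) ℝ) - pathAdj n) := by
    rw [smul_sub, smul_inv_smul₀ hα]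
  have h_inv : ((1 : Matrix (Fin n) (Fin n) ℝ) - α • pathAdj n)⁻¹ =
      (α * (S ℝ n).eval α⁻¹)⁻¹ • Matrix.of (fun a b : Fin n => pathGreen α⁻¹ n a b) := by
    apply Matrix.inv_eq_right_inv
    rw [h_factor, Matrix.mul_smul, Matrix.smul_mul, sub_pathAdj_mul_pathGreen, smul_smul α,
      inv_smul_smul₀ (mul_ne_zero hα hS)]
  rw [h_inv, Matrix.smul_apply, Matrix.of_apply, smul_eq_mul, inv_mul_eq_div]

end PathResolvent

theorem stmt17_general {α : ℝ} (hα0 : 0 < α) (hα1 : α ≤ 1 / 2) {n a b : ℕ}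
    (hn : a + b + 2 ≤ n) :
    (((1 : Matrix (Fin n) (Fin n) ℝ) - α • pathAdj n)⁻¹ - 1)
        ⟨a, by omega⟩ ⟨b, by omega⟩
      ≤ (((1 : Matrix (Fin n) (Fin n) ℝ) - α • pathAdj n)⁻¹ - 1)
          ⟨a + 1, by omega⟩ ⟨b + 1, by omega⟩ := by
  have hx : 2 ≤ α⁻¹ := by simpa using inv_anti₀ hα0 hα1
  have hS := eval_S_pos hx n.cast_nonneg
  have h_shift := pathGreen_add_one_add_one_sub α⁻¹ n a b
  have h_nonneg := (eval_S_nonneg_and_lt_add_one hx (m := n - 3 - a - b) (by omega)).1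
  simp only [Matrix.sub_apply, inv_one_sub_smul_pathAdj_apply hα0.ne' hS.ne', Matrix.one_apply,
    Fin.mk.injEq, add_left_inj, Nat.cast_add, Nat.cast_one]
  gcongr
  linarith

theorem stmt17 (α : ℝ) (hα0 : 0 < α) (hα1 : α < 1 / 2) (n i k : ℕ)
    (hi : 1 ≤ i) (hk : 1 ≤ k) (hn : k + 2 * i + 1 ≤ n) :
    (((1 : Matrix (Fin n) (Fin n) ℝ) - α • pathAdj n)⁻¹ - 1)
        ⟨i - 1, by omega⟩ ⟨i + k - 1, by omega⟩
      ≤ (((1 : Matrix (Fin n) (Fin n) ℝ) - α • pathAdj n)⁻¹ - 1)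
          ⟨i, by omega⟩ ⟨i + k, by omega⟩ := by
  convert stmt17_general hα0 hα1.le (show (i - 1) + (i + k - 1) + 2 ≤ n by omega) using 3 <;> omega
end
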